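/- Let (X,Σ,m) be a σ-finite measure space, B a separable Banach space, and E a Banach B-bundle over X such that E(x) is a reflexive Banach space for m-a.e. x ∈ X. Then for every p ∈ (1,∞), the section space Γ_p(E) is a reflexive Banach space. -/

import Mathlib

open MeasureTheory
open scoped ENNReal

/-- A *Banach `B`-bundle* over a measurable space `X`: a weakly measurable multivalued map
whose values are closed linear subspaces of `B`. -/
structure BanachBundle (X : Type*) [MeasurableSpace X]
    (B : Type*) [NormedAddCommGroup B] [NormedSpace ℝ B] where
  fiber : X → Submodule ℝ B
  isClosed_fiber : ∀ x, IsClosed (fiber x : Set B)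
  weaklyMeasurable : ∀ U : Set B, IsOpen U →
    MeasurableSet {x | ((fiber x : Set B) ∩ U).Nonempty}

/-- The space `Γ_p(E)` of `L^p`-sections of a Banach bundle `E`, realized as the subspace of
`L^p(m;B)` of elements whose representatives take values in the fibers `m`-a.e. -/
noncomputable def BanachBundle.sections {X B : Type*} [MeasurableSpace X]
    [NormedAddCommGroup B] [NormedSpace ℝ B]
    (m : Measure X) (p : ℝ≥0∞) [Fact (1 ≤ p)] (E : BanachBundle X B) :
    Submodule ℝ (Lp B p m) where
  carrier := {f | ∀ᵐ x ∂m, (f : X → B) x ∈ E.fiber x}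
  zero_mem' := by
    filter_upwards [Lp.coeFn_zero B p m] with x hx
    show (((0 : Lp B p m) : X → B)) x ∈ E.fiber x
    rw [hx]
    exact (E.fiber x).zero_mem
  add_mem' := by
    intro f g hf hg
    filter_upwards [hf, hg, Lp.coeFn_add f g] with x h1 h2 h3
    show (((f + g : Lp B p m) : X → B)) x ∈ E.fiber x
    rw [h3]
    exact (E.fiber x).add_mem h1 h2
  smul_mem' := by
    intro c f hf
    filter_upwards [hf, Lp.coeFn_smul c f] with x h1 h2
    show (((c • f : Lp B p m) : X → B)) x ∈ E.fiber x
    rw [h2]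
    exact (E.fiber x).smul_mem c h1

open Filter Topology
open scoped NNReal

section ScalarDuality

variable {X : Type*} [MeasurableSpace X] {m : Measure X}

theorem tendsto_eLpNorm_of_dominated {ι G : Type*} [NormedAddCommGroup G] {l : Filter ι}
    [l.IsCountablyGenerated] {p : ℝ≥0∞} (hp0 : p ≠ 0) (hp : p ≠ ∞) {F : ι → X → G} {f : X → G}
    {bound : X → ℝ} (hF : ∀ n, AEStronglyMeasurable (F n) m) (hf : AEStronglyMeasurable f m)
    (hbound : MemLp bound p m) (hle : ∀ n, ∀ᵐ x ∂m, ‖F n x - f x‖ ≤ bound x)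
    (hlim : ∀ᵐ x ∂m, Tendsto (fun n => F n x) l (𝓝 (f x))) :
    Tendsto (fun n => eLpNorm (F n - f) p m) l (𝓝 0) := by
  have hP : 0 < p.toReal := ENNReal.toReal_pos hp0 hp
  have key : Tendsto (fun n => ∫⁻ x, ‖F n x - f x‖ₑ ^ p.toReal ∂m) l (𝓝 (∫⁻ _, 0 ∂m)) := by
    refine tendsto_lintegral_filter_of_dominated_convergence'
      (fun x => ‖bound x‖ₑ ^ p.toReal) ?_ ?_ ?_ ?_
    · exact .of_forall fun n => ((hF n).sub hf).enorm.pow_const _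
    · refine .of_forall fun n => ?_
      filter_upwards [hle n] with x hx
      refine ENNReal.rpow_le_rpow ?_ hP.le
      rw [enorm_le_iff_norm_le]
      exact hx.trans (le_abs_self _)
    · exact (lintegral_rpow_enorm_lt_top_of_eLpNorm_lt_top hp0 hp hbound.2).ne
    · filter_upwards [hlim] with x hx
      have h1 : Tendsto (fun n => ‖F n x - f x‖ₑ) l (𝓝 0) := by
        have := (hx.sub_const (f x)).enorm
        simpa using this
      have := (ENNReal.continuous_rpow_const (y := p.toReal)).tendsto 0 |>.comp h1
      simpa [hP, Function.comp_def] using this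
  have := (ENNReal.continuous_rpow_const (y := 1 / p.toReal)).tendsto _ |>.comp key
  simp only [lintegral_zero] at this
  rw [ENNReal.zero_rpow_of_pos (by positivity)] at this
  refine this.congr fun n => ?_
  simp [eLpNorm_eq_lintegral_rpow_enorm_toReal hp0 hp]

theorem exists_pos_memLp [SigmaFinite m] {p : ℝ≥0∞} (hp0 : p ≠ 0) (hp : p ≠ ∞) :
    ∃ w : X → ℝ, Measurable w ∧ (∀ x, 0 < w x) ∧ MemLp w p m := by
  obtain ⟨g, hg0, hgm, hg⟩ := exists_pos_lintegral_lt_of_sigmaFinite m one_ne_zero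
  have hP : 0 < p.toReal := ENNReal.toReal_pos hp0 hp
  have hm : Measurable fun x => (g x : ℝ) ^ (1 / p.toReal) := by fun_prop
  refine ⟨_, hm, fun x => Real.rpow_pos_of_pos (hg0 x) _, hm.aestronglyMeasurable, ?_⟩
  rw [eLpNorm_lt_top_iff_lintegral_rpow_enorm_lt_top hp0 hp]
  refine lt_of_le_of_lt (le_of_eq (lintegral_congr fun x => ?_)) (hg.trans ENNReal.one_lt_top)
  rw [Real.enorm_of_nonneg (by positivity), ENNReal.ofReal_rpow_of_nonneg (by positivity) hP.le,
    ← Real.rpow_mul (by positivity)]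
  simp [hP.ne']

theorem eLpNorm_eq_ofReal_integral_rpow {r : ℝ≥0∞} (hr0 : r ≠ 0) (hr : r ≠ ∞) {f φ : X → ℝ}
    (hφ : ∀ x, |f x| ^ r.toReal = φ x) (hint : Integrable φ m) :
    eLpNorm f r m = ENNReal.ofReal ((∫ x, φ x ∂m) ^ (1 / r.toReal)) := by
  have hφ0 : ∀ x, 0 ≤ φ x := fun x => hφ x ▸ Real.rpow_nonneg (abs_nonneg _) _
  rw [eLpNorm_eq_lintegral_rpow_enorm_toReal hr0 hr,
    ← ENNReal.ofReal_rpow_of_nonneg (integral_nonneg hφ0) (by positivity),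
    ofReal_integral_eq_lintegral_ofReal hint (.of_forall hφ0)]
  congr 1
  refine lintegral_congr fun x => ?_
  rw [← hφ x, ← ENNReal.ofReal_rpow_of_nonneg (abs_nonneg _) ENNReal.toReal_nonneg,
    ← Real.norm_eq_abs, ofReal_norm]

theorem eLpNorm_le_of_forall_integral_mul_le {p q : ℝ≥0∞} [ENNReal.HolderConjugate p q]
    (hp : p ≠ ∞) (hq : q ≠ ∞) {w : X → ℝ} (hw : Measurable w) (hw0 : ∀ x, 0 < w x)
    (hwp : MemLp w p m) {g : X → ℝ} (hg : Measurable g) {C : ℝ}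
    (h : ∀ f : X → ℝ, Measurable f → MemLp f p m → (∃ K : ℝ, ∀ x, |f x| ≤ K * w x) →
      Integrable (fun x => f x * g x) m ∧
        ∫ x, f x * g x ∂m ≤ C * (eLpNorm f p m).toReal) :
    eLpNorm g q m ≤ ENNReal.ofReal C := by
  have hPQ := ENNReal.HolderConjugate.toReal_of_ne_top (p := p) (q := q) hp hq
  have hp0 : p ≠ 0 := ENNReal.HolderConjugate.ne_zero p q
  have hq0 : q ≠ 0 := ENNReal.HolderConjugate.ne_zero q p
  set P := p.toReal with hP
  set Q := q.toReal with hQ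
  have hP0 : 0 < P := hPQ.pos
  have hQ1 : 1 < Q := hPQ.symm.lt
  have hQ0 : 0 < Q := hPQ.symm.pos
  let A : ℕ → Set X := fun n => {x | |g x| ^ (Q - 1) ≤ n * w x}
  have hA : ∀ n, MeasurableSet (A n) := fun n =>
    measurableSet_le (by fun_prop) (by fun_prop)
  have habs : ∀ t : ℝ, |t * |t| ^ (Q - 2)| = |t| ^ (Q - 1) := by
    intro t
    rcases eq_or_ne t 0 with rfl | ht
    · simp [(sub_pos.2 hQ1).ne']
    · rw [abs_mul, abs_of_nonneg (Real.rpow_nonneg (abs_nonneg t) _),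
        ← Real.rpow_one_add' (abs_nonneg t) (by linarith)]
      ring_nf
  have hmul : ∀ t : ℝ, t * |t| ^ (Q - 2) * t = |t| ^ Q := by
    intro t
    rcases eq_or_ne t 0 with rfl | ht
    · simp [hQ0.ne']
    · have h1 : t * |t| ^ (Q - 2) * t = |t| ^ 2 * |t| ^ (Q - 2) := by rw [sq_abs]; ring
      rw [h1, ← Real.rpow_natCast, ← Real.rpow_add (abs_pos.2 ht)]
      congr 1
      push_cast
      ring
  have key : ∀ n, eLpNorm ((A n).indicator g) q m ≤ ENNReal.ofReal C := by
    intro n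
    let f : X → ℝ := (A n).indicator fun x => g x * |g x| ^ (Q - 2)
    let φ : X → ℝ := (A n).indicator fun x => |g x| ^ Q
    have hf : Measurable f := Measurable.indicator (by fun_prop) (hA n)
    have hfw : ∀ x, |f x| ≤ n * w x := by
      intro x
      by_cases hx : x ∈ A n
      · simp only [f, Set.indicator_of_mem hx, habs]
        exact hx
      · simp only [f, Set.indicator_of_notMem hx, abs_zero]
        exact mul_nonneg n.cast_nonneg (hw0 x).le
    have hfp : MemLp f p m := by
      refine (hwp.const_mul (n : ℝ)).mono' hf.aestronglyMeasurable (.of_forall fun x => ?_)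
      exact hfw x
    obtain ⟨hint, hle⟩ := h f hf hfp ⟨n, hfw⟩
    have hfg : (fun x => f x * g x) = φ := by
      funext x
      by_cases hx : x ∈ A n
      · simp only [f, φ, Set.indicator_of_mem hx, hmul]
      · simp only [f, φ, Set.indicator_of_notMem hx, zero_mul]
    have hfP : ∀ x, |f x| ^ P = φ x := by
      intro x
      by_cases hx : x ∈ A n
      · simp only [f, φ, Set.indicator_of_mem hx, habs]
        rw [← Real.rpow_mul (abs_nonneg _)]
        congr 1
        linarith [hPQ.mul_eq_add]
      · simp only [f, φ, Set.indicator_of_notMem hx, abs_zero, Real.zero_rpow hP0.ne']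
    have hgQ : ∀ x, |(A n).indicator g x| ^ Q = φ x := by
      intro x
      by_cases hx : x ∈ A n
      · simp only [φ, Set.indicator_of_mem hx]
      · simp only [φ, Set.indicator_of_notMem hx, abs_zero, Real.zero_rpow hQ0.ne']
    rw [hfg] at hint hle
    have hI0 : 0 ≤ ∫ x, φ x ∂m :=
      integral_nonneg fun x => hfP x ▸ Real.rpow_nonneg (abs_nonneg _) _
    rw [eLpNorm_eq_ofReal_integral_rpow hp0 hp hfP hint,
      ENNReal.toReal_ofReal (by positivity)] at hle
    rw [eLpNorm_eq_ofReal_integral_rpow hq0 hq hgQ hint]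
    set I := ∫ x, φ x ∂m
    rcases hI0.eq_or_lt with hI | hI
    · rw [← hI, Real.zero_rpow (by positivity)]
      simp
    · refine ENNReal.ofReal_le_ofReal ?_
      have h1 : I = I ^ (1 / Q) * I ^ (1 / P) := by
        rw [← Real.rpow_add hI, one_div, one_div, hPQ.symm.inv_add_inv_eq_one, Real.rpow_one]
      have h2 : 0 < I ^ (1 / P) := Real.rpow_pos_of_pos hI _
      refine le_of_mul_le_mul_right ?_ h2
      rw [← h1]
      exact hle
  refine Lp.eLpNorm_le_of_ae_tendsto (u := atTop) (.of_forall key)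
    (fun n => (hg.indicator (hA n)).aestronglyMeasurable) (.of_forall fun x => ?_)
  refine tendsto_const_nhds.congr' ?_
  obtain ⟨N, hN⟩ := exists_nat_ge (|g x| ^ (Q - 1) / w x)
  filter_upwards [eventually_ge_atTop N] with n hn
  have : x ∈ A n := by
    have : |g x| ^ (Q - 1) / w x ≤ n := hN.trans (by exact_mod_cast hn)
    exact (div_le_iff₀ (hw0 x)).1 this
  rw [Set.indicator_of_mem this]

theorem toLp_eq_zero_of_ae_eq_zero {p : ℝ≥0∞} {f : X → ℝ} (hf : MemLp f p m) (h : f =ᵐ[m] 0) :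
    hf.toLp = 0 :=
  Lp.ext ((hf.coeFn_toLp.trans h).trans (Lp.coeFn_zero ℝ p m).symm)

open Classical in
/-- The signed measure `s ↦ T (s.indicator w)` attached to a continuous functional `T` on `L^p`
and a weight `w` in `L^p`. -/
noncomputable def weightedSignedMeasure {p : ℝ≥0∞} [Fact (1 ≤ p)] (hp : p ≠ ∞) {w : X → ℝ}
    (hwp : MemLp w p m) (T : Lp ℝ p m →L[ℝ] ℝ) : SignedMeasure X where
  measureOf' s := if hs : MeasurableSet s then T ((hwp.indicator hs).toLp) else 0
  empty' := by
    refine (dif_pos MeasurableSet.empty).trans ?_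
    rw [toLp_eq_zero_of_ae_eq_zero _ (by rw [Set.indicator_empty']), map_zero]
  not_measurable' s hs := by simp [hs]
  m_iUnion' A hA hd := by
    have hp0 : p ≠ 0 := (zero_lt_one.trans_le Fact.out).ne'
    simp only [hA, MeasurableSet.iUnion hA, dite_true]
    refine HasSum.mapL T (f := fun i => ((hwp.indicator (hA i)).toLp : Lp ℝ p m)) ?_
    have hae : ∀ s : Finset ℕ, ⇑(∑ i ∈ s, ((hwp.indicator (hA i)).toLp : Lp ℝ p m)) =ᵐ[m]
        (⋃ i ∈ s, A i).indicator w := by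
      intro s
      refine (Lp.coeFn_finsetSum s _).trans ?_
      rw [Finset.indicator_biUnion s A (fun i _ j _ hij => hd hij)]
      have : ∀ᵐ x ∂m, ∀ i,
          ((hwp.indicator (hA i)).toLp : Lp ℝ p m) x = (A i).indicator w x :=
        ae_all_iff.2 fun i => (hwp.indicator (hA i)).coeFn_toLp
      filter_upwards [this] with x hx
      simp [hx]
    refine (Lp.tendsto_Lp_iff_tendsto_eLpNorm _ _ _).2 ?_
    have h := tendsto_eLpNorm_of_dominated (l := (atTop : Filter (Finset ℕ))) hp0 hp
      (F := fun s => (⋃ i ∈ s, A i).indicator w) (f := (⋃ i, A i).indicator w)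
      (fun s => (hwp.indicator (s.measurableSet_biUnion fun i _ => hA i)).1)
      (hwp.indicator (MeasurableSet.iUnion hA)).1 (hwp.norm.const_mul 2) ?_ ?_
    · refine h.congr fun s => eLpNorm_congr_ae ?_
      exact ((hae s).symm.sub EventuallyEq.rfl)
    · refine fun s => .of_forall fun x => ?_
      refine (norm_sub_le _ _).trans ?_
      have h1 := norm_indicator_le_norm_self w x (s := ⋃ i ∈ s, A i)
      have h2 := norm_indicator_le_norm_self w x (s := ⋃ i, A i)
      linarith
    · refine .of_forall fun x => tendsto_const_nhds.congr' ?_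
      by_cases hx : x ∈ ⋃ i, A i
      · obtain ⟨i, hi⟩ := Set.mem_iUnion.1 hx
        filter_upwards [eventually_ge_atTop {i}] with s hs
        rw [Set.indicator_of_mem hx, Set.indicator_of_mem]
        exact Set.mem_biUnion (by simpa using hs) hi
      · refine .of_forall fun s => ?_
        beta_reduce
        rw [Set.indicator_of_notMem hx, Set.indicator_of_notMem]
        exact fun h => hx (Set.iUnion₂_subset_iUnion _ _ h)

theorem weightedSignedMeasure_apply {p : ℝ≥0∞} [Fact (1 ≤ p)] (hp : p ≠ ∞) {w : X → ℝ}
    (hwp : MemLp w p m) (T : Lp ℝ p m →L[ℝ] ℝ) {s : Set X} (hs : MeasurableSet s) :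
    weightedSignedMeasure hp hwp T s = T ((hwp.indicator hs).toLp) := by
  classical
  change (if hs : MeasurableSet s then T ((hwp.indicator hs).toLp) else 0) = _
  exact dif_pos hs

theorem memLp_mul_of_abs_le {p : ℝ≥0∞} {w f : X → ℝ} (hwp : MemLp w p m) (hf : Measurable f)
    {K : ℝ} (hK : ∀ x, |f x| ≤ K) : MemLp (fun x => f x * w x) p m :=
  hwp.of_le_mul (c := K) (hf.aestronglyMeasurable.mul hwp.1) <| .of_forall fun x => by
    rw [norm_mul]
    exact mul_le_mul_of_nonneg_right (hK x) (norm_nonneg _)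

theorem exists_integrable_forall_bounded_apply_eq [SigmaFinite m] {p : ℝ≥0∞} [Fact (1 ≤ p)]
    (hp : p ≠ ∞) {w : X → ℝ} (hwp : MemLp w p m) (T : Lp ℝ p m →L[ℝ] ℝ) :
    ∃ k : X → ℝ, Measurable k ∧ Integrable k m ∧ ∀ (f : X → ℝ) (K : ℝ), Measurable f →
      (∀ x, |f x| ≤ K) → ∀ hf : MemLp (fun x => f x * w x) p m,
        T hf.toLp = ∫ x, f x * k x ∂m := by
  have hp0 : p ≠ 0 := (zero_lt_one.trans_le Fact.out).ne'
  set ν := weightedSignedMeasure hp hwp T with hν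
  have hac : ν ≪ᵥ m.toENNRealVectorMeasure := by
    refine VectorMeasure.AbsolutelyContinuous.mk fun s hs h0 => ?_
    rw [Measure.toENNRealVectorMeasure_apply_measurable hs] at h0
    rw [hν, weightedSignedMeasure_apply hp hwp T hs,
      toLp_eq_zero_of_ae_eq_zero _ (indicator_meas_zero h0), map_zero]
  have hk : Integrable (ν.rnDeriv m) m := SignedMeasure.integrable_rnDeriv _ _
  refine ⟨ν.rnDeriv m, SignedMeasure.measurable_rnDeriv _ _, hk, ?_⟩
  have hset : ∀ s (hs : MeasurableSet s), T ((hwp.indicator hs).toLp) =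
      ∫ x in s, ν.rnDeriv m x ∂m := by
    intro s hs
    rw [← withDensityᵥ_apply hk hs, SignedMeasure.withDensityᵥ_rnDeriv_eq ν m hac, hν,
      weightedSignedMeasure_apply hp hwp T hs]
  have hmem : ∀ f : SimpleFunc X ℝ, MemLp (fun x => f x * w x) p m := fun f => by
    obtain ⟨K, hK⟩ := f.exists_forall_norm_le
    exact memLp_mul_of_abs_le hwp f.measurable hK
  have hkint : ∀ f : SimpleFunc X ℝ, Integrable (fun x => f x * ν.rnDeriv m x) m := fun f => by
    obtain ⟨K, hK⟩ := f.exists_forall_norm_le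
    exact hk.bdd_mul f.measurable.aestronglyMeasurable (.of_forall hK)
  have hsimple : ∀ f : SimpleFunc X ℝ, T (hmem f).toLp = ∫ x, f x * ν.rnDeriv m x ∂m := by
    intro f
    induction f using SimpleFunc.induction with
    | const c hs =>
      rename_i s
      have h1 : (hmem (SimpleFunc.piecewise s hs (SimpleFunc.const X c)
          (SimpleFunc.const X 0))).toLp = c • (hwp.indicator hs).toLp := by
        rw [← MemLp.toLp_const_smul]
        refine MemLp.toLp_congr _ _ (.of_forall fun x => ?_)
        by_cases hx : x ∈ s <;> simp [hx]
      rw [h1, map_smul, hset s hs, ← integral_indicator hs, smul_eq_mul, ← integral_const_mul]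
      refine integral_congr_ae (.of_forall fun x => ?_)
      by_cases hx : x ∈ s <;> simp [hx]
    | add hd hf hg =>
      rename_i f g
      have h1 : (hmem (f + g)).toLp = (hmem f).toLp + (hmem g).toLp := by
        rw [← MemLp.toLp_add]
        refine MemLp.toLp_congr _ _ (.of_forall fun x => ?_)
        simp [add_mul]
      rw [h1, map_add, hf, hg, ← integral_add (hkint f) (hkint g)]
      refine integral_congr_ae (.of_forall fun x => ?_)
      simp [add_mul]
  intro f K hfm hK hf
  have hfs := hfm.stronglyMeasurable
  have hb : ∀ n x, ‖hfs.approxBounded K n x‖ ≤ K := fun n x =>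
    hfs.norm_approxBounded_le ((abs_nonneg _).trans (hK x)) n x
  have ht : ∀ x, Tendsto (fun n => hfs.approxBounded K n x) atTop (𝓝 (f x)) := fun x =>
    hfs.tendsto_approxBounded_of_norm_le (hK x)
  have h1 : Tendsto (fun n => T (hmem (hfs.approxBounded K n)).toLp) atTop (𝓝 (T hf.toLp)) := by
    refine (T.continuous.tendsto _).comp ?_
    refine (Lp.tendsto_Lp_iff_tendsto_eLpNorm'' _ (fun n => hmem (hfs.approxBounded K n)) _ hf).2 ?_
    refine tendsto_eLpNorm_of_dominated hp0 hp (fun n => (hmem _).1) hf.1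
      (hwp.norm.const_mul (K + K)) ?_ (.of_forall fun x => (ht x).mul_const _)
    refine fun n => .of_forall fun x => ?_
    rw [← sub_mul, norm_mul]
    refine mul_le_mul_of_nonneg_right ?_ (norm_nonneg _)
    exact (norm_sub_le _ _).trans (add_le_add (hb n x) (hK x))
  have h2 : Tendsto (fun n => ∫ x, hfs.approxBounded K n x * ν.rnDeriv m x ∂m) atTop
      (𝓝 (∫ x, f x * ν.rnDeriv m x ∂m)) := by
    refine tendsto_integral_of_dominated_convergence (fun x => K * ‖ν.rnDeriv m x‖)
      (fun n => (hkint _).1) (hk.norm.const_mul K) (fun n => .of_forall fun x => ?_)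
      (.of_forall fun x => (ht x).mul_const _)
    rw [norm_mul]
    exact mul_le_mul_of_nonneg_right (hb n x) (norm_nonneg _)
  refine tendsto_nhds_unique h1 ?_
  simpa only [hsimple] using h2

/-- Riesz representation: every continuous functional on `L^p` with `1 < p < ∞` is given by
integration against an element of `L^q`. -/
theorem exists_forall_apply_eq_integral_mul [SigmaFinite m] {p q : ℝ≥0∞} [Fact (1 ≤ p)]
    [ENNReal.HolderConjugate p q] (hp : p ≠ ∞) (hq : q ≠ ∞) (T : Lp ℝ p m →L[ℝ] ℝ) :
    ∃ g : X → ℝ, Measurable g ∧ MemLp g q m ∧ ∀ u : Lp ℝ p m, T u = ∫ x, u x * g x ∂m := by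
  have hp0 : p ≠ 0 := (zero_lt_one.trans_le Fact.out).ne'
  have : Fact (1 ≤ q) := ⟨ENNReal.HolderConjugate.one_le q p⟩
  obtain ⟨w, hw, hw0, hwp⟩ := exists_pos_memLp (m := m) hp0 hp
  obtain ⟨k, hkm, hki, hk⟩ := exists_integrable_forall_bounded_apply_eq hp hwp T
  have hTf : ∀ f : X → ℝ, Measurable f → ∀ hfp : MemLp f p m, (∃ K : ℝ, ∀ x, |f x| ≤ K * w x) →
      Integrable (fun x => f x * (k x / w x)) m ∧ T hfp.toLp = ∫ x, f x * (k x / w x) ∂m := by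
    rintro f hf hfp ⟨K, hK⟩
    have hK' : ∀ x, |f x / w x| ≤ K := fun x => by
      rw [abs_div, abs_of_pos (hw0 x), div_le_iff₀ (hw0 x)]
      exact hK x
    have e1 : (fun x => f x / w x * w x) = f := funext fun x => div_mul_cancel₀ _ (hw0 x).ne'
    have e2 : (fun x => f x * (k x / w x)) = fun x => f x / w x * k x := by
      funext x; ring
    rw [e2]
    refine ⟨hki.bdd_mul (hf.div hw).aestronglyMeasurable (.of_forall hK'), ?_⟩
    rw [← hk (fun x => f x / w x) K (hf.div hw) hK' (by simpa only [e1] using hfp)]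
    congr 1
    exact MemLp.toLp_congr _ _ (.of_forall fun x => (congrFun e1 x).symm)
  have hgm : Measurable fun x => k x / w x := hkm.div hw
  have hgq : MemLp (fun x => k x / w x) q m := by
    refine ⟨hgm.aestronglyMeasurable, lt_of_le_of_lt ?_ (ENNReal.ofReal_lt_top (r := ‖T‖))⟩
    refine eLpNorm_le_of_forall_integral_mul_le hp hq hw hw0 hwp hgm fun f hf hfp hfw => ?_
    obtain ⟨h1, h2⟩ := hTf f hf hfp hfw
    refine ⟨h1, h2 ▸ (le_abs_self _).trans ?_⟩
    refine (T.le_opNorm _).trans_eq ?_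
    rw [Lp.norm_toLp]
  refine ⟨_, hgm, hgq, fun u => ?_⟩
  let S : Lp ℝ p m →L[ℝ] ℝ := ((ContinuousLinearMap.mul ℝ ℝ).lpPairing m p q).flip hgq.toLp
  have hS : ∀ u : Lp ℝ p m, S u = ∫ x, u x * (k x / w x) ∂m := fun u => by
    simp only [S, ContinuousLinearMap.flip_apply, ContinuousLinearMap.lpPairing_eq_integral]
    refine integral_congr_ae ?_
    filter_upwards [hgq.coeFn_toLp] with x hx
    simp [hx]
  rw [← hS]
  have hum : Measurable u := (Lp.stronglyMeasurable u).measurable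
  let B : ℕ → Set X := fun n => {x | |u x| ≤ n * w x}
  have hB : ∀ n, MeasurableSet (B n) := fun n => measurableSet_le (by fun_prop) (by fun_prop)
  have hup := fun n => (Lp.memLp u).indicator (hB n)
  have hlim : Tendsto (fun n => (hup n).toLp) atTop (𝓝 u) := by
    suffices h : Tendsto (fun n => (hup n).toLp) atTop (𝓝 ((Lp.memLp u).toLp u)) by
      simpa only [Lp.toLp_coeFn] using h
    refine (Lp.tendsto_Lp_iff_tendsto_eLpNorm'' _ hup _ (Lp.memLp u)).2 ?_
    refine tendsto_eLpNorm_of_dominated hp0 hp (fun n => (hup n).1) (Lp.memLp u).1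
      ((Lp.memLp u).norm.const_mul 2) ?_ (.of_forall fun x => tendsto_const_nhds.congr' ?_)
    · refine fun n => .of_forall fun x => (norm_sub_le _ _).trans ?_
      have h1 := norm_indicator_le_norm_self u x (s := B n)
      linarith
    · obtain ⟨N, hN⟩ := exists_nat_ge (|u x| / w x)
      filter_upwards [eventually_ge_atTop N] with n hn
      have : x ∈ B n := (div_le_iff₀ (hw0 x)).1 (hN.trans (by exact_mod_cast hn))
      rw [Set.indicator_of_mem this]
  refine tendsto_nhds_unique ((T.continuous.tendsto _).comp hlim)
    (((S.continuous.tendsto _).comp hlim).congr fun n => ?_)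
  have hbd : ∃ K : ℝ, ∀ x, |(B n).indicator u x| ≤ K * w x := by
    refine ⟨n, fun x => ?_⟩
    by_cases hx : x ∈ B n
    · rw [Set.indicator_of_mem hx]; exact hx
    · rw [Set.indicator_of_notMem hx, abs_zero]
      exact mul_nonneg n.cast_nonneg (hw0 x).le
  simp only [Function.comp_apply]
  rw [(hTf _ (hum.indicator (hB n)) (hup n) hbd).2, hS]
  refine integral_congr_ae ?_
  filter_upwards [(hup n).coeFn_toLp] with x hx
  rw [hx]

end ScalarDuality

section MomentProblem

variable {ι V : Type*} [NormedAddCommGroup V] [NormedSpace ℝ V]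

theorem sum_mul_le_mul_norm_of_rat {y : ι → V} {c : ι → ℝ} {h : ℝ}
    (H : ∀ a : ι →₀ ℚ, ‖a.sum fun i t => (t : ℝ) • y i‖ ≤ 1 →
      (a.sum fun i t => (t : ℝ) * c i) ≤ h) (a : ι →₀ ℚ) :
    (a.sum fun i t => (t : ℝ) * c i) ≤ h * ‖a.sum fun i t => (t : ℝ) • y i‖ := by
  have hh : 0 ≤ h := by simpa using H 0 (by simp)
  have key : ∀ t : ℚ, ‖a.sum fun i t => (t : ℝ) • y i‖ < t →
      (a.sum fun i t => (t : ℝ) * c i) ≤ h * t := by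
    intro t ht
    have ht0 : (0 : ℝ) < t := (norm_nonneg _).trans_lt ht
    have h1 : ((t⁻¹ • a).sum fun i t => (t : ℝ) • y i) =
        (t : ℝ)⁻¹ • a.sum fun i t => (t : ℝ) • y i := by
      rw [Finsupp.sum_smul_index (by simp), Finsupp.smul_sum]
      simp [mul_smul]
    have h2 : ((t⁻¹ • a).sum fun i t => (t : ℝ) * c i) =
        (t : ℝ)⁻¹ * a.sum fun i t => (t : ℝ) * c i := by
      rw [Finsupp.sum_smul_index (by simp), Finsupp.mul_sum]
      simp [mul_assoc]
    have h3 := H (t⁻¹ • a) (by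
      rw [h1, norm_smul, norm_inv, Real.norm_of_nonneg ht0.le, inv_mul_le_iff₀ ht0, mul_one]
      exact ht.le)
    rwa [h2, inv_mul_le_iff₀ ht0, mul_comm] at h3
  by_contra! hlt
  rcases hh.eq_or_lt with rfl | hpos
  · obtain ⟨t, ht⟩ := exists_rat_gt ‖a.sum fun i t => (t : ℝ) • y i‖
    have := key t ht
    simp only [zero_mul] at this hlt
    linarith
  · obtain ⟨t, ht, ht'⟩ := exists_rat_btwn ((lt_div_iff₀' hpos).2 hlt)
    have := key t ht
    rw [lt_div_iff₀' hpos] at ht'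
    linarith

/-- Solvability of the moment problem `f (y i) = c i` with a norm bound, tested on rational
combinations only. -/
theorem exists_norm_le_forall_apply_eq {y : ι → V} {c : ι → ℝ} {h : ℝ}
    (H : ∀ a : ι →₀ ℚ, ‖a.sum fun i t => (t : ℝ) • y i‖ ≤ 1 →
      (a.sum fun i t => (t : ℝ) * c i) ≤ h) :
    ∃ f : StrongDual ℝ V, ‖f‖ ≤ h ∧ ∀ i, f (y i) = c i := by
  have hh : 0 ≤ h := by simpa using H 0 (by simp)
  have hreal : ∀ b : ι →₀ ℝ, Finsupp.linearCombination ℝ c b ≤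
      h * ‖Finsupp.linearCombination ℝ y b‖ := by
    intro b
    have hcl : IsClosed {x : ι → ℝ | ∑ i ∈ b.support, x i * c i ≤
        h * ‖∑ i ∈ b.support, x i • y i‖} :=
      isClosed_le (by fun_prop) (by fun_prop)
    have hd : DenseRange (Pi.map fun (_ : ι) (t : ℚ) => (t : ℝ)) :=
      DenseRange.piMap fun _ => Rat.denseRange_cast
    refine hd.induction_on (p := fun x : ι → ℝ => ∑ i ∈ b.support, x i * c i ≤
        h * ‖∑ i ∈ b.support, x i • y i‖) b hcl fun t => ?_
    have := sum_mul_le_mul_norm_of_rat H (Finsupp.indicator b.support fun i _ => t i)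
    rw [Finsupp.sum_of_support_subset _ (Finsupp.support_indicator_subset _ _) _ (by simp),
      Finsupp.sum_of_support_subset _ (Finsupp.support_indicator_subset _ _) _ (by simp)] at this
    convert this using 3
    · rename_i i hi
      simp [Finsupp.indicator_of_mem hi]
    · refine Finset.sum_congr rfl fun i hi => ?_
      simp [Finsupp.indicator_of_mem hi]
  set Y := Finsupp.linearCombination ℝ y
  set C := Finsupp.linearCombination ℝ c
  have hker : LinearMap.ker Y ≤ LinearMap.ker C := by
    intro b hb
    rw [LinearMap.mem_ker] at hb ⊢
    have h1 := hreal b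
    have h2 := hreal (-b)
    simp only [map_neg, hb, norm_neg, norm_zero, mul_zero] at h1 h2
    linarith
  let f₀ : LinearMap.range Y →ₗ[ℝ] ℝ :=
    ((LinearMap.ker Y).liftQ C hker).comp (Y.quotKerEquivRange.symm : _ →ₗ[ℝ] _)
  have hf₀ : ∀ b, f₀ ⟨Y b, LinearMap.mem_range_self Y b⟩ = C b := fun b => by
    simp only [f₀, LinearMap.comp_apply, LinearEquiv.coe_coe]
    rw [LinearMap.quotKerEquivRange_symm_apply_image Y b (LinearMap.mem_range_self Y b)]
    simp
  have hbound : ∀ v, ‖f₀ v‖ ≤ h * ‖v‖ := by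
    rintro ⟨_, b, rfl⟩
    rw [hf₀, Real.norm_eq_abs, abs_le]
    have h1 := hreal b
    have h2 := hreal (-b)
    simp only [map_neg, norm_neg] at h2
    exact ⟨by simpa using neg_le_neg h2, h1⟩
  obtain ⟨f, hf, hfn⟩ := exists_extension_norm_eq _ (f₀.mkContinuous h hbound)
  refine ⟨f, hfn.trans_le (LinearMap.mkContinuous_norm_le _ hh _), fun i => ?_⟩
  have h1 := hf₀ (Finsupp.single i 1)
  have h2 := hf ⟨Y (Finsupp.single i 1), LinearMap.mem_range_self Y _⟩
  simp only [LinearMap.mkContinuous_apply] at h2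
  rw [h1] at h2
  simpa [Y, C] using h2

end MomentProblem

section Domination

variable {X : Type*} [MeasurableSpace X] {m : Measure X}

theorem exists_ae_forall_le_of_eLpNorm_le {s : ℝ≥0∞} (hs0 : s ≠ 0) {f : ℕ → X → ℝ}
    (hf : ∀ n, Measurable (f n)) (hmono : ∀ x, Monotone fun n => f n x) (hf0 : ∀ n x, 0 ≤ f n x)
    {R : ℝ≥0} (hR : ∀ n, eLpNorm (f n) s m ≤ R) :
    ∃ h : X → ℝ, Measurable h ∧ MemLp h s m ∧ ∀ᵐ x ∂m, ∀ n, f n x ≤ h x := by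
  have hm : Measurable fun x => (⨆ n, ‖f n x‖ₑ).toReal :=
    (Measurable.iSup fun n => (hf n).enorm).ennreal_toReal
  have hlim : ∀ᵐ x ∂m, Tendsto (fun n => f n x) atTop (𝓝 (⨆ n, ‖f n x‖ₑ).toReal) := by
    filter_upwards [ae_bdd_liminf_atTop_of_eLpNorm_bdd hs0 hf hR] with x hx
    have hmono' : Monotone fun n => ‖f n x‖ₑ := fun a b hab => by
      simp only [Real.enorm_of_nonneg (hf0 _ x)]
      exact ENNReal.ofReal_le_ofReal (hmono x hab)
    have ht := tendsto_atTop_iSup hmono'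
    rw [ht.liminf_eq] at hx
    refine ((ENNReal.tendsto_toReal hx.ne).comp ht).congr fun n => ?_
    simp [abs_of_nonneg (hf0 n x)]
  refine ⟨_, hm, ⟨hm.aestronglyMeasurable, ?_⟩, ?_⟩
  · exact (Lp.eLpNorm_le_of_ae_tendsto (.of_forall hR) (fun n => (hf n).aestronglyMeasurable)
      hlim).trans_lt ENNReal.coe_lt_top
  · filter_upwards [hlim] with x hx n
    exact (hmono x).ge_of_tendsto hx n

/-- Successive measurable maximizers of countably many functions `G b`, each available only on
the set `S b`. -/
theorem exists_simpleFunc_forall_lt_le {β : Type*} (e : ℕ → β) {S : β → Set X}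
    (hS : ∀ b, MeasurableSet (S b)) {b₀ : β} (hb₀ : ∀ x, x ∈ S b₀) {G : β → X → ℝ}
    (hG : ∀ b, Measurable (G b)) :
    ∃ j : ℕ → SimpleFunc X β, (∀ n x, x ∈ S (j n x)) ∧ (∀ x, j 0 x = b₀) ∧
      (∀ x, Monotone fun n => G (j n x) x) ∧
      ∀ n x, x ∈ S (e n) → G (e n) x ≤ G (j (n + 1) x) x := by
  classical
  have hT : ∀ (n : ℕ) (f : SimpleFunc X β), MeasurableSet (S (e n) ∩ {x | G (f x) x < G (e n) x}) :=
    fun n f => (hS _).inter (measurableSet_lt (f.measurable_bind G hG) (hG _))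
  let j : ℕ → SimpleFunc X β := fun n => Nat.rec (SimpleFunc.const X b₀)
    (fun n f => SimpleFunc.piecewise _ (hT n f) (SimpleFunc.const X (e n)) f) n
  have hj : ∀ n x, j (n + 1) x =
      if x ∈ S (e n) ∩ {x | G (j n x) x < G (e n) x} then e n else j n x := fun n x => by
    change SimpleFunc.piecewise _ (hT n (j n)) (SimpleFunc.const X (e n)) (j n) x = _
    rw [SimpleFunc.piecewise_apply, SimpleFunc.const_apply]
    congr
  refine ⟨j, fun n x => ?_, fun x => rfl, fun x => monotone_nat_of_le_succ fun n => ?_,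
    fun n x hx => ?_⟩
  · induction n with
    | zero => exact hb₀ x
    | succ n ih =>
      rw [hj]
      split_ifs with h
      exacts [h.1, ih]
  · rw [hj]
    split_ifs with h
    exacts [le_of_lt h.2, le_rfl]
  · rw [hj]
    split_ifs with h
    · exact le_rfl
    · exact not_lt.1 fun hlt => h ⟨hx, hlt⟩

/-- Representation of the functionals `F ∘ L i` by densities `g i`, together with an `L^s` function
dominating those rational combinations of the densities that are selected by the sets `S a`. -/
theorem exists_densities_ae_le [SigmaFinite m] {r s : ℝ≥0∞} [Fact (1 ≤ r)]
    [ENNReal.HolderConjugate r s] (hr : r ≠ ∞) (hs : s ≠ ∞) {ι W : Type*} [Countable ι]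
    [NormedAddCommGroup W] [NormedSpace ℝ W] (L : ι → Lp ℝ r m →L[ℝ] W) (F : StrongDual ℝ W)
    {S : (ι →₀ ℚ) → Set X} (hS : ∀ a, MeasurableSet (S a)) (hS0 : ∀ x, x ∈ S 0)
    (hL : ∀ (I : Finset ι) (j : SimpleFunc X (ι →₀ ℚ)), (∀ x, (j x).support ⊆ I) →
      (∀ x, x ∈ S (j x)) → ∀ (u : Lp ℝ r m) (v : ι → Lp ℝ r m),
        (∀ i, v i =ᵐ[m] fun x => (j x i : ℝ) * u x) → ‖∑ i ∈ I, L i (v i)‖ ≤ ‖u‖) :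
    ∃ g : ι → X → ℝ, (∀ i, Measurable (g i)) ∧ (∀ i, MemLp (g i) s m) ∧
      (∀ i u, F (L i u) = ∫ x, u x * g i x ∂m) ∧
      ∃ h : X → ℝ, Measurable h ∧ MemLp h s m ∧
        ∀ᵐ x ∂m, ∀ a : ι →₀ ℚ, x ∈ S a → (a.sum fun i t => (t : ℝ) * g i x) ≤ h x := by
  classical
  have hr0 : r ≠ 0 := ENNReal.HolderConjugate.ne_zero r s
  have hs0 : s ≠ 0 := ENNReal.HolderConjugate.ne_zero s r
  choose g hgm hgs hg using fun i => exists_forall_apply_eq_integral_mul hr hs (F.comp (L i))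
  refine ⟨g, hgm, hgs, hg, ?_⟩
  let G : (ι →₀ ℚ) → X → ℝ := fun a x => a.sum fun i t => (t : ℝ) * g i x
  have hG : ∀ a, Measurable (G a) := fun a =>
    Finset.measurable_fun_sum _ fun i _ => (hgm i).const_mul _
  obtain ⟨e, he⟩ := exists_surjective_nat (ι →₀ ℚ)
  obtain ⟨j, hjS, hj0, hjmono, hjle⟩ := exists_simpleFunc_forall_lt_le e hS hS0 hG
  obtain ⟨w, hw, hw0, hwp⟩ := exists_pos_memLp (m := m) hr0 hr
  have hbound : ∀ n, eLpNorm (fun x => G (j n x) x) s m ≤ ENNReal.ofReal ‖F‖ := by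
    intro n
    let I : Finset ι := (j n).range.biUnion Finsupp.support
    have hI : ∀ x, (j n x).support ⊆ I := fun x =>
      Finset.subset_biUnion_of_mem _ (SimpleFunc.mem_range_self _ x)
    refine eLpNorm_le_of_forall_integral_mul_le hr hs hw hw0 hwp ((j n).measurable_bind G hG)
      fun f hf hfp _ => ?_
    have hv : ∀ i, MemLp (fun x => (j n x i : ℝ) * f x) r m := fun i => by
      let c : SimpleFunc X ℝ := (j n).map fun a => (a i : ℝ)
      obtain ⟨K, hK⟩ := c.exists_forall_norm_le
      exact memLp_mul_of_abs_le hfp c.measurable hK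
    have hint : ∀ i, Integrable (fun x => (j n x i : ℝ) * f x * g i x) m := fun i =>
      MemLp.integrable_mul (hv i) (hgs i)
    have hexp : (fun x => f x * G (j n x) x) =
        fun x => ∑ i ∈ I, (j n x i : ℝ) * f x * g i x := by
      funext x
      simp only [G]
      rw [Finsupp.sum_of_support_subset _ (hI x) _ (by simp), Finset.mul_sum]
      exact Finset.sum_congr rfl fun i _ => by ring
    rw [hexp]
    refine ⟨integrable_finsetSum _ fun i _ => hint i, ?_⟩
    rw [integral_finsetSum _ fun i _ => hint i]
    have h1 : ∀ i, ∫ x, (j n x i : ℝ) * f x * g i x ∂m = F (L i (hv i).toLp) := fun i => by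
      rw [← ContinuousLinearMap.comp_apply, hg]
      refine integral_congr_ae ?_
      filter_upwards [(hv i).coeFn_toLp] with x hx
      rw [hx]
    simp only [h1]
    rw [← map_sum, ← Lp.norm_toLp f hfp]
    refine (le_abs_self _).trans ((F.le_opNorm _).trans ?_)
    refine mul_le_mul_of_nonneg_left (hL I (j n) hI (hjS n) _ _ fun i => ?_) (norm_nonneg _)
    filter_upwards [(hv i).coeFn_toLp, hfp.coeFn_toLp] with x hx hx'
    rw [hx, hx']
  obtain ⟨h, hhm, hhs, hh⟩ := exists_ae_forall_le_of_eLpNorm_le hs0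
    (fun n => (j n).measurable_bind G hG) hjmono (fun n x => by
      have := hjmono x (Nat.zero_le n)
      simpa [hj0, G] using this) hbound
  refine ⟨h, hhm, hhs, ?_⟩
  filter_upwards [hh] with x hx a ha
  obtain ⟨n, rfl⟩ := he a
  exact (hjle n x ha).trans (hx _)

end Domination

section WeakMeasurability

variable {X B : Type*} [MeasurableSpace X] {m : Measure X} [NormedAddCommGroup B]
  [NormedSpace ℝ B]

theorem measurable_apply_of_forall_measurable_apply {θ : X → StrongDual ℝ B}
    (hθ : ∀ b, Measurable fun x => θ x b) {v : X → B} (hv : StronglyMeasurable v) :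
    Measurable fun x => θ x (v x) :=
  measurable_of_tendsto_metrizable
    (fun n => (hv.approx n).measurable_bind (fun b x => θ x b) hθ)
    (tendsto_pi_nhds.2 fun x => ((θ x).continuous.tendsto _).comp (hv.tendsto_approx x))

theorem measurable_apply_of_denseRange {θ : X → StrongDual ℝ B} {b : ℕ → B} (hb : DenseRange b)
    (hθ : ∀ i, Measurable fun x => θ x (b i)) (c : B) : Measurable fun x => θ x c := by
  obtain ⟨u, hu, hlim⟩ := mem_closure_iff_seq_limit.1 (hb c)
  choose k hk using hu
  refine measurable_of_tendsto_metrizable (f := fun n x => θ x (u n)) (fun n => ?_)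
    (tendsto_pi_nhds.2 fun x => ((θ x).continuous.tendsto _).comp hlim)
  simpa only [hk] using hθ (k n)

theorem memLp_apply_of_norm_le {p : ℝ≥0∞} {θ : X → StrongDual ℝ B}
    (hθ : ∀ b, Measurable fun x => θ x b) (hθ1 : ∀ x, ‖θ x‖ ≤ 1) (v : Lp B p m) :
    MemLp (fun x => θ x (v x)) p m :=
  (Lp.memLp v).of_le
    (measurable_apply_of_forall_measurable_apply hθ (Lp.stronglyMeasurable v)).aestronglyMeasurable
    (.of_forall fun x => ((θ x).le_of_opNorm_le (hθ1 x) _).trans_eq (one_mul _))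

theorem exists_continuousLinearMap_ae_eq_apply {p : ℝ≥0∞} [Fact (1 ≤ p)] {θ : X → StrongDual ℝ B}
    (hθ : ∀ b, Measurable fun x => θ x b) (hθ1 : ∀ x, ‖θ x‖ ≤ 1) :
    ∃ M : Lp B p m →L[ℝ] Lp ℝ p m, ∀ v, M v =ᵐ[m] fun x => θ x (v x) := by
  have hmem := memLp_apply_of_norm_le (p := p) (m := m) hθ hθ1
  let M₀ : Lp B p m →ₗ[ℝ] Lp ℝ p m :=
    { toFun := fun v => (hmem v).toLp
      map_add' := fun v w => by
        rw [← MemLp.toLp_add]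
        refine MemLp.toLp_congr _ _ ?_
        filter_upwards [Lp.coeFn_add v w] with x hx
        rw [hx, Pi.add_apply, map_add, Pi.add_apply]
      map_smul' := fun c v => by
        rw [RingHom.id_apply, ← MemLp.toLp_const_smul]
        refine MemLp.toLp_congr _ _ ?_
        filter_upwards [Lp.coeFn_smul c v] with x hx
        rw [hx, Pi.smul_apply, map_smul, Pi.smul_apply] }
  refine ⟨M₀.mkContinuous 1 fun v => ?_, fun v => (hmem v).coeFn_toLp⟩
  rw [one_mul]
  refine Lp.norm_le_norm_of_ae_le ?_
  filter_upwards [(hmem v).coeFn_toLp] with x hx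
  refine (congrArg norm hx).trans_le ?_
  exact ((θ x).le_of_opNorm_le (hθ1 x) _).trans_eq (one_mul _)

/-- The pairing `u ↦ (v ↦ ∫ u θ(v))` between scalar functions and vector-valued functions. -/
theorem exists_pairing_apply {p q : ℝ≥0∞} [Fact (1 ≤ p)] [Fact (1 ≤ q)]
    [ENNReal.HolderConjugate p q] {θ : X → StrongDual ℝ B}
    (hθ : ∀ b, Measurable fun x => θ x b) (hθ1 : ∀ x, ‖θ x‖ ≤ 1) :
    ∃ L : Lp ℝ q m →L[ℝ] Lp B p m →L[ℝ] ℝ, ∀ u v, L u v = ∫ x, u x * θ x (v x) ∂m := by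
  obtain ⟨M, hM⟩ := exists_continuousLinearMap_ae_eq_apply (m := m) (p := p) hθ hθ1
  refine ⟨(((ContinuousLinearMap.mul ℝ ℝ).lpPairing m p q).comp M).flip, fun u v => ?_⟩
  rw [ContinuousLinearMap.flip_apply, ContinuousLinearMap.comp_apply,
    ContinuousLinearMap.lpPairing_eq_integral]
  refine integral_congr_ae ?_
  filter_upwards [hM v] with x hx
  simp [hx, mul_comm]

variable (m B) in
/-- The map `b ↦ (u ↦ u • b)` from `B` to operators from scalar to `B`-valued functions. -/
noncomputable def smulConstLp (p : ℝ≥0∞) [Fact (1 ≤ p)] : B →L[ℝ] Lp ℝ p m →L[ℝ] Lp B p m :=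
  (ContinuousLinearMap.lsmul ℝ ℝ).flip.compLpL₂ p m

theorem coeFn_smulConstLp {p : ℝ≥0∞} [Fact (1 ≤ p)] (b : B) (u : Lp ℝ p m) :
    smulConstLp B m p b u =ᵐ[m] fun x => u x • b := by
  rw [smulConstLp, ContinuousLinearMap.compLpL₂_apply_apply]
  filter_upwards [ContinuousLinearMap.coeFn_compLp ((ContinuousLinearMap.lsmul ℝ ℝ).flip b) u]
    with x hx
  rw [hx]
  rfl

theorem ext_of_denseRange_smulConstLp {p : ℝ≥0∞} [Fact (1 ≤ p)] (hp : p ≠ ∞) {b : ℕ → B}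
    (hb : DenseRange b) {φ ψ : Lp B p m →L[ℝ] ℝ}
    (h : ∀ i u, φ (smulConstLp B m p (b i) u) = ψ (smulConstLp B m p (b i) u)) : φ = ψ := by
  have hall : ∀ c u, φ (smulConstLp B m p c u) = ψ (smulConstLp B m p c u) := fun c u => by
    have hcl : IsClosed {c : B | φ (smulConstLp B m p c u) = ψ (smulConstLp B m p c u)} :=
      isClosed_eq (by fun_prop) (by fun_prop)
    exact hb.induction_on (p := fun c => φ (smulConstLp B m p c u) = ψ (smulConstLp B m p c u)) c
      hcl fun i => h i u
  ext v
  induction v using Lp.induction hp with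
  | indicatorConst c hs hμs =>
    rename_i s
    have : (Lp.simpleFunc.indicatorConst p hs hμs.ne c : Lp B p m) =
        smulConstLp B m p c (indicatorConstLp p hs hμs.ne (1 : ℝ)) := by
      rw [Lp.simpleFunc.coe_indicatorConst]
      refine Lp.ext (indicatorConstLp_coeFn.trans ?_)
      filter_upwards [coeFn_smulConstLp c (indicatorConstLp p hs hμs.ne (1 : ℝ)),
        indicatorConstLp_coeFn (p := p) (hs := hs) (hμs := hμs.ne) (c := (1 : ℝ))] with x h1 h2
      rw [h1, h2]
      by_cases hx : x ∈ s <;> simp [hx]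
    rw [this, hall]
  | add hf hg _ hf' hg' => rw [map_add, map_add, hf', hg']
  | isClosed => exact isClosed_eq φ.continuous ψ.continuous

/-- Every continuous functional on `L^p(m; B)`, with `B` separable, is given by a weakly measurable
field of functionals on `B`, written as a field in the unit ball times an `L^q` function. -/
theorem exists_apply_eq_integral_mul_apply [SigmaFinite m] [TopologicalSpace.SeparableSpace B]
    {p q : ℝ≥0∞} [Fact (1 ≤ p)] [Fact (1 ≤ q)] [ENNReal.HolderConjugate p q] (hp : p ≠ ∞)
    (hq : q ≠ ∞) (φ : Lp B p m →L[ℝ] ℝ) :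
    ∃ (θ : X → StrongDual ℝ B) (H : Lp ℝ q m), (∀ b, Measurable fun x => θ x b) ∧
      (∀ x, ‖θ x‖ ≤ 1) ∧ ∀ v, φ v = ∫ x, H x * θ x (v x) ∂m := by
  classical
  obtain ⟨b, hb⟩ := TopologicalSpace.exists_dense_seq B
  obtain ⟨g, hgm, hgq, hg, h, hhm, hhq, hle⟩ := exists_densities_ae_le (m := m) hp hq
    (fun i => smulConstLp B m p (b i)) φ
    (S := fun a => {_x | ‖a.sum fun i t => (t : ℝ) • b i‖ ≤ 1})
    (fun a => MeasurableSet.const _) (fun x => by simp) (by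
      intro I j hjI hjS u v hv
      refine Lp.norm_le_norm_of_ae_le ?_
      have hv' : ∀ᵐ x ∂m, ∀ i, smulConstLp B m p (b i) (v i) x = ((j x i : ℝ) * u x) • b i :=
        ae_all_iff.2 fun i => by
          filter_upwards [hv i, coeFn_smulConstLp (b i) (v i)] with x h1 h2
          rw [h2, h1]
      filter_upwards [hv', Lp.coeFn_finsetSum I fun i => smulConstLp B m p (b i) (v i)]
        with x h1 h2
      have h3 : ∑ i ∈ I, smulConstLp B m p (b i) (v i) x =
          u x • (j x).sum fun i t => (t : ℝ) • b i := by
        rw [Finsupp.sum_of_support_subset _ (hjI x) _ (by simp), Finset.smul_sum]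
        exact Finset.sum_congr rfl fun i _ => by rw [h1, smul_smul, mul_comm]
      rw [h2, Finset.sum_apply, h3, norm_smul]
      exact mul_le_of_le_one_right (norm_nonneg _) (hjS x))
  obtain ⟨N, hNsub, hNm, hN0⟩ := exists_measurable_superset_of_null hle
  have hmoment : ∀ x, x ∉ N → ∃ f : StrongDual ℝ B, ‖f‖ ≤ h x ∧ ∀ i, f (b i) = g i x := by
    intro x hx
    refine exists_norm_le_forall_apply_eq fun a ha => ?_
    by_contra hcon
    exact hx (hNsub fun hall => hcon (hall a ha))
  choose! Φ hΦ using hmoment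
  let θ : X → StrongDual ℝ B := fun x => if x ∈ N then 0 else (h x)⁻¹ • Φ x
  have hθ : ∀ c, Measurable fun x => θ x c := by
    refine measurable_apply_of_denseRange hb fun i => ?_
    have : (fun x => θ x (b i)) = fun x => if x ∈ N then 0 else (h x)⁻¹ * g i x := by
      funext x
      by_cases hx : x ∈ N
      · simp [θ, hx]
      · simp [θ, hx, (hΦ x hx).2]
    rw [this]
    exact Measurable.ite hNm measurable_const (hhm.inv.mul (hgm i))
  have hθ1 : ∀ x, ‖θ x‖ ≤ 1 := fun x => by
    by_cases hx : x ∈ N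
    · simp [θ, hx]
    · have h0 := (hΦ x hx).1
      have h1 : 0 ≤ h x := (norm_nonneg _).trans h0
      simp only [θ, hx, if_false, norm_smul, norm_inv, Real.norm_of_nonneg h1]
      exact inv_mul_le_one_of_le₀ h0 h1
  have hhθ : ∀ x, x ∉ N → ∀ i, h x * θ x (b i) = g i x := fun x hx i => by
    obtain ⟨h0, h1⟩ := hΦ x hx
    simp only [θ, hx, if_false, FunLike.coe_smul, Pi.smul_apply, smul_eq_mul, ← h1]
    by_cases hz : h x = 0
    · have : Φ x = 0 := norm_le_zero_iff.1 (h0.trans_eq hz)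
      simp [this]
    · rw [mul_inv_cancel_left₀ hz]
  obtain ⟨L, hL⟩ := exists_pairing_apply (m := m) (p := p) (q := q) hθ hθ1
  refine ⟨θ, hhq.toLp, hθ, hθ1, fun v => ?_⟩
  rw [← hL]
  refine DFunLike.congr_fun (ext_of_denseRange_smulConstLp hp hb fun i u => ?_) v
  rw [hg, hL]
  refine integral_congr_ae ?_
  filter_upwards [hhq.coeFn_toLp, coeFn_smulConstLp (b i) u, measure_eq_zero_iff_ae_notMem.1 hN0]
    with x h1 h2 h3
  rw [h1, h2, map_smul, smul_eq_mul, ← hhθ x h3]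
  ring

end WeakMeasurability

section SeparableBanach

variable {X B : Type*} [MeasurableSpace X] {m : Measure X} [NormedAddCommGroup B]
  [NormedSpace ℝ B]

variable (B) in
theorem exists_seq_norming [TopologicalSpace.SeparableSpace B] :
    ∃ ψ : ℕ → StrongDual ℝ B, (∀ n, ‖ψ n‖ ≤ 1) ∧ ∀ b c, (∀ n, ψ n b ≤ c) → ‖b‖ ≤ c := by
  obtain ⟨e, he⟩ := TopologicalSpace.exists_dense_seq B
  choose ψ hψ hψe using fun n => exists_dual_vector'' ℝ (e n)
  refine ⟨ψ, hψ, fun b c hc => le_of_forall_pos_le_add fun ε hε => ?_⟩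
  obtain ⟨n, hn⟩ := Metric.denseRange_iff.1 he b (ε / 2) (half_pos hε)
  rw [dist_eq_norm] at hn
  have h1 : ‖b‖ ≤ ‖e n‖ + ‖b - e n‖ := norm_le_norm_add_norm_sub' _ _
  have h2 : ‖e n‖ = ψ n (e n) := (hψe n).symm
  have h3 : ψ n (e n) - ψ n b ≤ ‖b - e n‖ := by
    rw [← map_sub, ← norm_sub_rev (e n)]
    exact (le_abs_self _).trans (((ψ n).le_of_opNorm_le (hψ n) _).trans_eq (one_mul _))
  linarith [hc n]

theorem stronglyMeasurable_of_norming [TopologicalSpace.SeparableSpace B]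
    {ψ : ℕ → StrongDual ℝ B} (hψ1 : ∀ n, ‖ψ n‖ ≤ 1) (hψ : ∀ b c, (∀ n, ψ n b ≤ c) → ‖b‖ ≤ c)
    {v : X → B} (hv : ∀ n, Measurable fun x => ψ n (v x)) : StronglyMeasurable v := by
  borelize B
  have : SecondCountableTopology B := UniformSpace.secondCountable_of_separable B
  have hball : ∀ c r, MeasurableSet (v ⁻¹' Metric.closedBall c r) := fun c r => by
    have : v ⁻¹' Metric.closedBall c r = ⋂ n, {x | ψ n (v x) - ψ n c ≤ r} := by
      ext x
      simp only [Set.mem_preimage, Metric.mem_closedBall, dist_eq_norm, Set.mem_iInter,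
        Set.mem_ofPred_eq, ← map_sub]
      refine ⟨fun h n => ?_, hψ _ _⟩
      exact (le_abs_self _).trans
        ((((ψ n).le_of_opNorm_le (hψ1 n) _).trans_eq (one_mul _)).trans h)
    rw [this]
    exact MeasurableSet.iInter fun n => measurableSet_le ((hv n).sub_const _) measurable_const
  refine (measurable_of_isOpen fun U hU => ?_).stronglyMeasurable
  choose! r hr hrU using fun b (hb : b ∈ U) =>
    Metric.nhds_basis_closedBall.mem_iff.1 (hU.mem_nhds hb)
  obtain ⟨T, hTU, hT, hTeq⟩ := TopologicalSpace.isOpen_biUnion_countable U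
    (fun b => Metric.ball b (r b)) fun b _ => Metric.isOpen_ball
  have : U = ⋃ b ∈ T, Metric.closedBall b (r b) := by
    refine Set.Subset.antisymm (fun b hb => ?_) (Set.iUnion₂_subset fun b hb => hrU b (hTU hb))
    have h1 : b ∈ ⋃ b ∈ U, Metric.ball b (r b) :=
      Set.mem_biUnion hb (Metric.mem_ball_self (hr b hb))
    rw [← hTeq] at h1
    exact Set.iUnion₂_mono (fun b _ => Metric.ball_subset_closedBall) h1
  rw [this, Set.preimage_iUnion₂]
  exact MeasurableSet.biUnion hT fun b _ => hball _ _

theorem integrable_coeFn_mul_coeFn {p q : ℝ≥0∞} [ENNReal.HolderConjugate p q] (u : Lp ℝ q m)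
    {f : X → ℝ} (hf : MemLp f p m) : Integrable (fun x => u x * f x) m :=
  have : ENNReal.HolderConjugate q p := .symm
  MemLp.integrable_mul (Lp.memLp u) hf

theorem abs_integral_le_norm_mul_norm {p q : ℝ≥0∞} [ENNReal.HolderConjugate p q] (u : Lp ℝ q m)
    (w : Lp B p m) {f : X → ℝ} (hf : ∀ᵐ x ∂m, |f x| ≤ |u x| * ‖w x‖) :
    |∫ x, f x ∂m| ≤ ‖u‖ * ‖w‖ := by
  have : ENNReal.HolderConjugate q p := .symm
  have h1 : ‖∫ x, f x ∂m‖ₑ ≤ eLpNorm u q m * eLpNorm w p m := calc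
    ‖∫ x, f x ∂m‖ₑ ≤ ∫⁻ x, ‖f x‖ₑ ∂m := enorm_integral_le_lintegral_enorm _
    _ ≤ ∫⁻ x, ‖((u : X → ℝ) • (w : X → B)) x‖ₑ ∂m := by
      refine lintegral_mono_ae ?_
      filter_upwards [hf] with x hx
      rw [enorm_le_iff_norm_le, Pi.smul_apply', norm_smul]
      exact hx
    _ = eLpNorm ((u : X → ℝ) • (w : X → B)) 1 m := eLpNorm_one_eq_lintegral_enorm.symm
    _ ≤ _ := eLpNorm_smul_le_mul_eLpNorm (Lp.memLp w).1 (Lp.memLp u).1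
  rw [← Real.norm_eq_abs, ← toReal_enorm, Lp.norm_def, Lp.norm_def, ← ENNReal.toReal_mul]
  exact ENNReal.toReal_mono (ENNReal.mul_ne_top (Lp.eLpNorm_ne_top u) (Lp.eLpNorm_ne_top w)) h1

theorem ae_eq_of_forall_integral_mul_eq [SigmaFinite m] {p q : ℝ≥0∞}
    [ENNReal.HolderConjugate p q] {f g : X → ℝ} (hf : MemLp f p m) (hg : MemLp g p m)
    (h : ∀ u : Lp ℝ q m, ∫ x, u x * f x ∂m = ∫ x, u x * g x ∂m) : f =ᵐ[m] g := by
  have hu : ∀ {s} (hs : MeasurableSet s) (hμs : m s < ∞) (k : X → ℝ),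
      (fun x => indicatorConstLp q hs hμs.ne (1 : ℝ) x * k x) =ᵐ[m] s.indicator k := by
    intro s hs hμs k
    filter_upwards [indicatorConstLp_coeFn (p := q) (hs := hs) (hμs := hμs.ne) (c := (1 : ℝ))]
      with x hx
    rw [hx]
    by_cases hxs : x ∈ s <;> simp [hxs]
  have hint : ∀ {s} (hs : MeasurableSet s) (hμs : m s < ∞) {k : X → ℝ}, MemLp k p m →
      IntegrableOn k s m := fun hs hμs k hk =>
    (integrable_indicator_iff hs).1 ((integrable_congr (hu hs hμs k)).1
      (integrable_coeFn_mul_coeFn _ hk))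
  refine (sub_ae_eq_zero _ _).1 (ae_eq_zero_of_forall_setIntegral_eq_of_sigmaFinite
    (fun s hs hμs => hint hs hμs (hf.sub hg)) fun s hs hμs => ?_)
  simp only [Pi.sub_apply]
  rw [integral_sub (hint hs hμs hf) (hint hs hμs hg), sub_eq_zero, ← integral_indicator hs,
    ← integral_indicator hs, ← integral_congr_ae (hu hs hμs f), ← integral_congr_ae (hu hs hμs g)]
  exact h _

theorem Lp_ext_of_norming [SigmaFinite m] {p q : ℝ≥0∞} [ENNReal.HolderConjugate p q]
    {ψ : ℕ → StrongDual ℝ B} (hψ : ∀ b c, (∀ n, ψ n b ≤ c) → ‖b‖ ≤ c) {v w : Lp B p m}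
    (h : ∀ n (u : Lp ℝ q m), ∫ x, u x * ψ n (v x) ∂m = ∫ x, u x * ψ n (w x) ∂m) : v = w := by
  have h1 : ∀ᵐ x ∂m, ∀ n, ψ n (v x) = ψ n (w x) := ae_all_iff.2 fun n =>
    ae_eq_of_forall_integral_mul_eq ((ψ n).comp_memLp v) ((ψ n).comp_memLp w) (h n)
  refine Lp.ext ?_
  filter_upwards [h1] with x hx
  exact sub_eq_zero.1 (norm_le_zero_iff.1 (hψ _ _ fun n => by rw [map_sub, hx, sub_self]))

end SeparableBanach

namespace BanachBundle

variable {X B : Type*} [MeasurableSpace X] {m : Measure X} [NormedAddCommGroup B]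
  [NormedSpace ℝ B] (E : BanachBundle X B)

theorem measurableSet_norm_comp_subtypeL_le_one [TopologicalSpace.SeparableSpace B]
    {θ : X → StrongDual ℝ B} (hθ : ∀ b, Measurable fun x => θ x b) {K : ℝ} (hK0 : 0 ≤ K)
    (hK : ∀ x, ‖θ x‖ ≤ K) : MeasurableSet {x | ‖(θ x).comp (E.fiber x).subtypeL‖ ≤ 1} := by
  obtain ⟨e, he⟩ := TopologicalSpace.exists_dense_seq B
  have hcompl : {x | ‖(θ x).comp (E.fiber x).subtypeL‖ ≤ 1}ᶜ =
      ⋃ (n : ℕ) (r : ℚ), {x | ((E.fiber x : Set B) ∩ Metric.ball (e n) r).Nonempty} ∩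
        {x | ‖e n‖ + r * (K + 1) < θ x (e n)} := by
    ext x
    simp only [Set.mem_compl_iff, Set.mem_ofPred_eq, Set.mem_iUnion, Set.mem_inter_iff]
    constructor
    · intro hx
      obtain ⟨b, hbE, hb⟩ : ∃ b ∈ E.fiber x, ‖b‖ < θ x b := by
        by_contra! hcon
        refine hx (ContinuousLinearMap.opNorm_le_bound _ zero_le_one fun b => ?_)
        rw [one_mul, Real.norm_eq_abs]
        refine abs_le.2 ⟨?_, hcon b b.2⟩
        have := hcon (-b) ((E.fiber x).neg_mem b.2)
        rw [map_neg, norm_neg] at this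
        exact neg_le.1 this
      have hpos : 0 < (θ x b - ‖b‖) / (2 * (K + 1)) := div_pos (sub_pos.2 hb) (by positivity)
      obtain ⟨r, hr0, hr⟩ := exists_rat_btwn hpos
      obtain ⟨n, hn⟩ := Metric.denseRange_iff.1 he b r hr0
      refine ⟨n, r, ⟨b, hbE, hn⟩, ?_⟩
      rw [lt_div_iff₀ (by positivity)] at hr
      rw [dist_eq_norm] at hn
      have h1 : θ x b - θ x (e n) ≤ K * ‖b - e n‖ := by
        rw [← map_sub]
        exact (le_abs_self _).trans ((θ x).le_of_opNorm_le (hK x) _)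
      have h2 : ‖e n‖ ≤ ‖b‖ + ‖b - e n‖ := norm_le_norm_add_norm_sub _ _
      nlinarith
    · rintro ⟨n, r, ⟨b, hbE, hb⟩, hr⟩ hx
      have h0 : θ x b ≤ ‖b‖ := (le_abs_self _).trans
        ((((θ x).comp (E.fiber x).subtypeL).le_of_opNorm_le hx ⟨b, hbE⟩).trans_eq (one_mul _))
      rw [Metric.mem_ball, dist_eq_norm] at hb
      have h1 : θ x (e n) - θ x b ≤ K * ‖b - e n‖ := by
        rw [← map_sub, norm_sub_rev b]
        exact (le_abs_self _).trans ((θ x).le_of_opNorm_le (hK x) _)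
      have h2 : ‖b‖ ≤ ‖e n‖ + ‖b - e n‖ := norm_le_norm_add_norm_sub' _ _
      nlinarith
  refine MeasurableSet.of_compl ?_
  rw [hcompl]
  exact MeasurableSet.iUnion fun n => MeasurableSet.iUnion fun r =>
    (E.weaklyMeasurable _ Metric.isOpen_ball).inter (measurableSet_lt measurable_const (hθ _))

variable {E} in
/-- A functional on the dual of a reflexive fiber is represented by a vector as soon as it
satisfies the moment inequalities. -/
theorem exists_mem_fiber_forall_apply_eq {x : X}
    (hx : Function.Surjective (NormedSpace.inclusionInDoubleDual ℝ ↥(E.fiber x))) {ι : Type*}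
    {θ : ι → StrongDual ℝ B} {c : ι → ℝ} {h : ℝ}
    (H : ∀ a : ι →₀ ℚ, ‖(a.sum fun i t => (t : ℝ) • θ i).comp (E.fiber x).subtypeL‖ ≤ 1 →
      (a.sum fun i t => (t : ℝ) * c i) ≤ h) :
    ∃ b ∈ E.fiber x, ‖b‖ ≤ h ∧ ∀ i, θ i b = c i := by
  obtain ⟨f, hf, hfc⟩ := exists_norm_le_forall_apply_eq
    (y := fun i => (θ i).comp (E.fiber x).subtypeL) (c := c) (h := h) fun a ha => by
      refine H a (le_of_eq_of_le (congrArg norm ?_) ha)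
      ext b
      simp [Finsupp.sum]
  obtain ⟨b, rfl⟩ := hx f
  refine ⟨b, b.2, ?_, fun i => ?_⟩
  · exact ((NormedSpace.inclusionInDoubleDualLi ℝ).norm_map b).symm.trans_le hf
  · rw [← hfc i]
    rfl

theorem exists_section_forall_apply_eq_integral [SigmaFinite m]
    [TopologicalSpace.SeparableSpace B]
    (hrefl : ∀ᵐ x ∂m, Function.Surjective (NormedSpace.inclusionInDoubleDual ℝ ↥(E.fiber x)))
    {p q : ℝ≥0∞} [Fact (1 ≤ p)] [Fact (1 ≤ q)] [ENNReal.HolderConjugate p q] (hp : p ≠ ∞)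
    (hq : q ≠ ∞) {ι : Type*} [Countable ι] {θ : ι → X → StrongDual ℝ B}
    (hθ : ∀ i b, Measurable fun x => θ i x b) (hθ1 : ∀ i x, ‖θ i x‖ ≤ 1)
    {ψ : ℕ → StrongDual ℝ B} (hψ1 : ∀ n, ‖ψ n‖ ≤ 1) (hψ : ∀ b c, (∀ n, ψ n b ≤ c) → ‖b‖ ≤ c)
    {κ : ℕ → ι} (hκ : ∀ n x, θ (κ n) x = ψ n) (F : StrongDual ℝ (StrongDual ℝ (E.sections m p))) :
    ∃ v : E.sections m p, ∀ (i : ι) (u : Lp ℝ q m) (φ : StrongDual ℝ (E.sections m p)),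
      (∀ w : E.sections m p, φ w = ∫ x, u x * θ i x ((w : Lp B p m) x) ∂m) →
        F φ = ∫ x, u x * θ i x ((v : Lp B p m) x) ∂m := by
  classical
  have : ENNReal.HolderConjugate q p := .symm
  choose L₀ hL₀ using fun i => exists_pairing_apply (m := m) (p := p) (q := q) (hθ i) (hθ1 i)
  let L : ι → Lp ℝ q m →L[ℝ] StrongDual ℝ (E.sections m p) := fun i =>
    ((L₀ i).flip.comp (E.sections m p).subtypeL).flip
  have hL : ∀ i u (w : E.sections m p), L i u w = ∫ x, u x * θ i x ((w : Lp B p m) x) ∂m :=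
    fun i u w => hL₀ i u w
  have hΘ : ∀ (a : ι →₀ ℚ) x b, (a.sum fun i t => (t : ℝ) • θ i x) b =
      ∑ i ∈ a.support, (a i : ℝ) * θ i x b := fun a x b => by
    simp [Finsupp.sum]
  obtain ⟨g, hgm, hgp, hg, h, hhm, hhp, hle⟩ := exists_densities_ae_le (m := m)
    (W := StrongDual ℝ (E.sections m p)) hq hp L F
    (S := fun a => {x | ‖(a.sum fun i t => (t : ℝ) • θ i x).comp (E.fiber x).subtypeL‖ ≤ 1})
    (fun a => by
      refine E.measurableSet_norm_comp_subtypeL_le_one (K := ∑ i ∈ a.support, |(a i : ℝ)|)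
        (fun b => ?_) (Finset.sum_nonneg fun _ _ => abs_nonneg _) fun x => ?_
      · simp only [hΘ]
        exact Finset.measurable_fun_sum _ fun i _ => (hθ i b).const_mul _
      · refine norm_sum_le_of_le _ fun i _ => ?_
        rw [norm_smul]
        exact mul_le_of_le_one_right (norm_nonneg _) (hθ1 i x))
    (fun x => ContinuousLinearMap.opNorm_le_bound _ zero_le_one fun b => by simp) (by
      intro I j hjI hjS u v hv
      refine ContinuousLinearMap.opNorm_le_bound _ (norm_nonneg _) fun w => ?_
      have hint : ∀ i, Integrable (fun x => v i x * θ i x ((w : Lp B p m) x)) m := fun i =>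
        integrable_coeFn_mul_coeFn _ (memLp_apply_of_norm_le (hθ i) (hθ1 i) _)
      rw [_root_.sum_apply]
      simp only [hL]
      rw [← integral_finsetSum _ fun i _ => hint i]
      refine abs_integral_le_norm_mul_norm u (w : Lp B p m) ?_
      filter_upwards [ae_all_iff.2 hv, w.2] with x hx hwx
      have h1 : ∑ i ∈ I, v i x * θ i x ((w : Lp B p m) x) =
          u x * ((j x).sum fun i t => (t : ℝ) • θ i x) ((w : Lp B p m) x) := by
        rw [hΘ, Finset.mul_sum]
        refine (Finset.sum_subset (hjI x) fun i _ hi => ?_).symm.trans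
          (Finset.sum_congr rfl fun i _ => ?_)
        · rw [hx, Finsupp.notMem_support_iff.1 hi]
          simp
        · rw [hx]
          ring
      rw [h1, abs_mul]
      refine mul_le_mul_of_nonneg_left ?_ (abs_nonneg _)
      exact (ContinuousLinearMap.le_of_opNorm_le _ (hjS x)
        (⟨(w : Lp B p m) x, hwx⟩ : E.fiber x)).trans_eq (one_mul _))
  obtain ⟨N, hNsub, hNm, hN0⟩ := exists_measurable_superset_of_null (hrefl.and hle)
  have hmoment : ∀ x, x ∉ N → ∃ b, b ∈ E.fiber x ∧ ‖b‖ ≤ h x ∧ ∀ i, θ i x b = g i x := by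
    intro x hx
    have hx' := not_not.1 fun hcon => hx (hNsub hcon)
    exact exists_mem_fiber_forall_apply_eq hx'.1 hx'.2
  choose! z hzE hzh hzg using hmoment
  let v : X → B := fun x => if x ∈ N then 0 else z x
  have hvm : StronglyMeasurable v := by
    refine stronglyMeasurable_of_norming hψ1 hψ fun n => ?_
    have : (fun x => ψ n (v x)) = fun x => if x ∈ N then 0 else g (κ n) x := by
      funext x
      by_cases hx : x ∈ N
      · simp [v, hx]
      · simp [v, hx, ← hzg x hx, hκ]
    rw [this]
    exact Measurable.ite hNm measurable_const (hgm _)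
  have hvp : MemLp v p m := hhp.of_le hvm.aestronglyMeasurable (.of_forall fun x => by
    by_cases hx : x ∈ N
    · simp [v, hx]
    · simp only [v, hx, if_false]
      exact (hzh x hx).trans (le_abs_self _))
  have hNae : ∀ᵐ x ∂m, x ∉ N := measure_eq_zero_iff_ae_notMem.1 hN0
  have hvE : hvp.toLp ∈ E.sections m p := by
    change ∀ᵐ x ∂m, hvp.toLp v x ∈ E.fiber x
    filter_upwards [hvp.coeFn_toLp, hNae] with x h1 h2
    rw [h1]
    simpa [v, h2] using hzE x h2
  refine ⟨⟨_, hvE⟩, fun i u φ hφ => ?_⟩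
  have hφL : φ = L i u := by
    ext w
    rw [hφ, hL]
  rw [hφL, hg]
  refine integral_congr_ae ?_
  filter_upwards [hvp.coeFn_toLp, hNae] with x h1 h2
  rw [h1]
  simp [v, h2, hzg x h2]

end BanachBundle

/-- If `m`-a.e. fiber of a Banach `B`-bundle `E` (with `B` separable) is reflexive, then the
section space `Γ_p(E)` is reflexive for every `p ∈ (1,∞)` (reflexivity expressed via
surjectivity of the canonical inclusion into the double dual). -/
theorem sections_reflexive_of_ae_fiber_reflexive
    {X B : Type*} [MeasurableSpace X] (m : Measure X) [SigmaFinite m]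
    [NormedAddCommGroup B] [NormedSpace ℝ B] [CompleteSpace B]
    [TopologicalSpace.SeparableSpace B]
    (E : BanachBundle X B)
    (hrefl : ∀ᵐ x ∂m,
      Function.Surjective (NormedSpace.inclusionInDoubleDual ℝ ↥(E.fiber x)))
    (p : ℝ≥0∞) [Fact (1 ≤ p)] (hp : 1 < p) (hp' : p ≠ ∞) :
    Function.Surjective (NormedSpace.inclusionInDoubleDual ℝ ↥(E.sections m p)) := by
  intro F
  obtain ⟨ψ, hψ1, hψ⟩ := exists_seq_norming B
  obtain ⟨q, hpq⟩ : ∃ q, ENNReal.HolderConjugate p q := ⟨p.conjExponent, inferInstance⟩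
  have hqp : ENNReal.HolderConjugate q p := .symm
  have hq : q ≠ ∞ := ((ENNReal.HolderConjugate.lt_top_iff_one_lt q p).2 hp).ne
  have : Fact (1 ≤ q) := ⟨ENNReal.HolderConjugate.one_le q p⟩
  obtain ⟨v, hv⟩ := E.exists_section_forall_apply_eq_integral hrefl hp' hq
    (θ := fun n _ => ψ n) (fun n b => measurable_const) (fun n _ => hψ1 n) hψ1 hψ
    (κ := id) (fun _ _ => rfl) F
  refine ⟨v, ContinuousLinearMap.ext fun φ => ?_⟩
  obtain ⟨φ', hφ', -⟩ := exists_extension_norm_eq (E.sections m p) φ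
  obtain ⟨θ, H, hθ, hθ1, hφθ⟩ := exists_apply_eq_integral_mul_apply hp' hq φ'
  obtain ⟨w, hw⟩ := E.exists_section_forall_apply_eq_integral hrefl hp' hq
    (θ := fun i : Option ℕ => i.elim θ fun n _ => ψ n)
    (fun i b => match i with
      | none => hθ b
      | some n => measurable_const (a := ψ n b))
    (fun i x => match i with
      | none => hθ1 x
      | some n => hψ1 n) hψ1 hψ
    (κ := some) (fun _ _ => rfl) F
  have hvw : v = w := by
    refine Subtype.ext (Lp_ext_of_norming (q := q) hψ fun n u => ?_)
    obtain ⟨L, hL⟩ := exists_pairing_apply (m := m) (p := p) (q := q) (θ := fun _ => ψ n)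
      (fun b => measurable_const) (fun _ => hψ1 n)
    have hLu : ∀ z : E.sections m p, (L u).comp (E.sections m p).subtypeL z =
        ∫ x, u x * ψ n ((z : Lp B p m) x) ∂m := fun z => hL u z
    exact (hv n u _ hLu).symm.trans (hw (some n) u _ hLu)
  rw [NormedSpace.dual_def, hvw, hw none H φ fun z => by rw [← hφ', hφθ]; rfl, ← hφ', hφθ]
  rfl
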